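/- There exists a constant c > 0 with the following property. Let m be a positive integer, p ∈ [0, 1/2], and θ ∈ ℝ^m with ‖θ‖_∞ ≤ 1/4. Let a ∈ {0,1}^m be random with independent coordinates satisfying Pr[a_i = 1] = p. Then E[|cos(2π·Σ_{i=1}^m a_i·θ_i)|] ≤ 1 - min{(1/4)·p·‖θ‖₂², c}. -/

import Mathlib

/-!
The absolute value is removed by `|cos x| ≤ (1 + cos² x) / 2 = 3/4 + cos (2x) / 4`, after which the
expectation is controlled by the characteristic function of `∑ aᵢθᵢ` at frequency `4π`
(`sum_weight_mul_exp`), which by independence is a product of the factors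
`p e^{4πiθⱼ} + (1 - p)`. Since `|4πθⱼ| ≤ π` and `p ≤ 1/2`, each factor has modulus at most
`exp (-16 p θⱼ²)` (`norm_factor_le`). With `s = p ‖θ‖₂²` the expectation is therefore at most
`1 - (1 - exp (-16 s)) / 4`, and `1 - exp (-16 s) ≥ 16 s / (1 + 16 s) ≥ min s (1/2)`, so that
`c = 1/8` works.
-/

open Real

lemma abs_cos_le (x : ℝ) : |Real.cos x| ≤ 3 / 4 + Real.cos (2 * x) / 4 := by
  rw [Real.cos_two_mul]
  nlinarith [sq_nonneg (|Real.cos x| - 1), sq_abs (Real.cos x)]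

/-- Jordan's inequality `|sin (φ/2)| ≥ |φ| / π`, in the form of a bound on `1 - cos φ`, for
`φ = 4πt`. -/
lemma one_sub_cos_ge (t : ℝ) (ht : |t| ≤ 1 / 4) : 32 * t ^ 2 ≤ 1 - Real.cos (4 * π * t) := by
  have h := Real.cos_le_one_sub_mul_cos_sq (x := 4 * π * t) (by
    rw [abs_mul, abs_of_pos (by positivity : (0 : ℝ) < 4 * π)]
    nlinarith [Real.pi_pos])
  have e : 2 / π ^ 2 * (4 * π * t) ^ 2 = 32 * t ^ 2 := by
    field_simp
    ring
  linarith

lemma norm_factor_le (p t : ℝ) (hp : 0 ≤ p) (hp2 : p ≤ 1 / 2) (ht : |t| ≤ 1 / 4) :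
    ‖(p : ℂ) * Complex.exp ((4 * π * t : ℝ) * Complex.I) + ((1 - p : ℝ) : ℂ)‖ ≤
      Real.exp (-(16 * p * t ^ 2)) := by
  have hc := one_sub_cos_ge t ht
  have hsq : ‖(p : ℂ) * Complex.exp ((4 * π * t : ℝ) * Complex.I) + ((1 - p : ℝ) : ℂ)‖ ^ 2
      = 1 - 2 * p * (1 - p) * (1 - Real.cos (4 * π * t)) := by
    rw [← Complex.normSq_eq_norm_sq, Complex.normSq_apply]
    simp only [Complex.add_re, Complex.add_im, Complex.re_ofReal_mul, Complex.im_ofReal_mul,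
      Complex.exp_ofReal_mul_I_re, Complex.exp_ofReal_mul_I_im, Complex.ofReal_re,
      Complex.ofReal_im]
    linear_combination p ^ 2 * Real.sin_sq_add_cos_sq (4 * π * t)
  refine le_of_sq_le_sq ?_ (Real.exp_pos _).le
  rw [hsq, ← Real.exp_nat_mul]
  have h1 : p * (32 * t ^ 2) ≤ 2 * p * (1 - p) * (1 - Real.cos (4 * π * t)) :=
    mul_le_mul (by nlinarith) hc (by positivity) (by nlinarith)
  have h2 := Real.add_one_le_exp (((2 : ℕ) : ℝ) * -(16 * p * t ^ 2))
  push_cast at h2 ⊢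
  linarith

/-- Independence: the characteristic function of `∑ aᵢθᵢ` factorizes. -/
lemma sum_weight_mul_exp (m : ℕ) (p : ℝ) (θ : Fin m → ℝ) :
    ∑ a : Fin m → Bool, (((∏ i, if a i then p else 1 - p : ℝ)) : ℂ) *
        Complex.exp ((4 * π * ∑ i, if a i then θ i else 0 : ℝ) * Complex.I) =
      ∏ i, ((p : ℂ) * Complex.exp ((4 * π * θ i : ℝ) * Complex.I) + ((1 - p : ℝ) : ℂ)) := by
  have h := Finset.prod_univ_sum (fun _ : Fin m => (Finset.univ : Finset Bool))
    (fun i b => if b then (p : ℂ) * Complex.exp ((4 * π * θ i : ℝ) * Complex.I)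
      else ((1 - p : ℝ) : ℂ))
  simp only [Fintype.sum_bool, Fintype.piFinset_univ, if_true, Bool.false_eq_true, if_false] at h
  rw [h]
  refine Finset.sum_congr rfl fun a _ => ?_
  rw [Finset.mul_sum, Complex.ofReal_sum, Finset.sum_mul, Complex.exp_sum, Complex.ofReal_prod,
    ← Finset.prod_mul_distrib]
  refine Finset.prod_congr rfl fun i _ => ?_
  by_cases hi : a i <;> simp [hi]

lemma sum_weight (m : ℕ) (p : ℝ) :
    ∑ a : Fin m → Bool, (∏ i, if a i then p else 1 - p) = 1 := by
  have h := Finset.prod_univ_sum (fun _ : Fin m => (Finset.univ : Finset Bool))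
    (fun _ b => if b then p else 1 - p)
  simp only [Fintype.sum_bool, Fintype.piFinset_univ, if_true, Bool.false_eq_true, if_false] at h
  rw [← h]
  simp

lemma sum_weight_mul_cos_le (m : ℕ) (p : ℝ) (hp : 0 ≤ p) (hp2 : p ≤ 1 / 2) (θ : Fin m → ℝ)
    (hθ : ‖θ‖ ≤ 1 / 4) :
    ∑ a : Fin m → Bool, (∏ i, if a i then p else 1 - p) *
        Real.cos (4 * π * ∑ i, if a i then θ i else 0) ≤
      Real.exp (-(16 * (p * ∑ i, θ i ^ 2))) := by
  have h := congrArg Complex.re (sum_weight_mul_exp m p θ)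
  simp only [Complex.re_sum, Complex.re_ofReal_mul, Complex.exp_ofReal_mul_I_re] at h
  rw [h]
  refine (Complex.re_le_norm _).trans ?_
  rw [norm_prod, Finset.mul_sum, Finset.mul_sum, ← Finset.sum_neg_distrib, Real.exp_sum]
  refine Finset.prod_le_prod (fun _ _ => norm_nonneg _) fun i _ => ?_
  have hi : |θ i| ≤ 1 / 4 := (norm_le_pi_norm θ i).trans hθ
  simpa only [mul_assoc] using norm_factor_le p (θ i) hp hp2 hi

lemma min_le_one_sub_exp (s : ℝ) (hs : 0 ≤ s) :
    min (1 / 4 * s) (1 / 8) ≤ (1 - Real.exp (-(16 * s))) / 4 := by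
  have h1 : Real.exp (-(16 * s)) ≤ (1 + 16 * s)⁻¹ := by
    rw [Real.exp_neg]
    exact inv_anti₀ (by positivity) (by linarith [Real.add_one_le_exp (16 * s)])
  have h2 : (1 + 16 * s)⁻¹ * (1 + 16 * s) = 1 := inv_mul_cancel₀ (by positivity)
  have h3 : 0 < (1 + 16 * s)⁻¹ := by positivity
  rcases le_total s (1 / 2) with h | h
  · refine (min_le_left _ _).trans ?_
    nlinarith [mul_nonneg hs h3.le, mul_nonneg (mul_nonneg hs h3.le) (sub_nonneg.2 h)]
  · refine (min_le_right _ _).trans ?_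
    nlinarith [mul_nonneg h3.le (sub_nonneg.2 h)]

/-- There is a constant `c > 0` such that for `a ∈ {0,1}^m` with independent
`Bernoulli(p)` coordinates and `‖θ‖_∞ ≤ 1/4` (sup norm on `Fin m → ℝ`):
`E[|cos(2π ∑ aᵢθᵢ)|] ≤ 1 - min{(1/4)·p·‖θ‖₂², c}`. -/
theorem stmt_17 : ∃ c : ℝ, 0 < c ∧
    ∀ (m : ℕ), 0 < m → ∀ (p : ℝ), 0 ≤ p → p ≤ 1 / 2 →
    ∀ (θ : Fin m → ℝ), ‖θ‖ ≤ 1 / 4 →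
      ∑ a : Fin m → Bool, (∏ i, if a i then p else 1 - p) *
          |Real.cos (2 * π * ∑ i, if a i then θ i else 0)| ≤
        1 - min (1 / 4 * p * ∑ i, θ i ^ 2) c := by
  refine ⟨1 / 8, by norm_num, fun m _ p hp hp2 θ hθ => ?_⟩
  have hw : ∀ a : Fin m → Bool, 0 ≤ ∏ i, if a i then p else 1 - p := fun a =>
    Finset.prod_nonneg fun i _ => by split_ifs <;> linarith
  have hbound : ∑ a : Fin m → Bool, (∏ i, if a i then p else 1 - p) *
        |Real.cos (2 * π * ∑ i, if a i then θ i else 0)| ≤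
      3 / 4 * ∑ a : Fin m → Bool, (∏ i, if a i then p else 1 - p) +
      1 / 4 * ∑ a : Fin m → Bool, (∏ i, if a i then p else 1 - p) *
        Real.cos (4 * π * ∑ i, if a i then θ i else 0) := by
    rw [Finset.mul_sum, Finset.mul_sum, ← Finset.sum_add_distrib]
    refine Finset.sum_le_sum fun a _ => ?_
    have h := mul_le_mul_of_nonneg_left
      (abs_cos_le (2 * π * ∑ i, if a i then θ i else 0)) (hw a)
    rw [show 2 * (2 * π * ∑ i, if a i then θ i else 0) =
      4 * π * ∑ i, if a i then θ i else 0 by ring] at h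
    linarith
  rw [sum_weight] at hbound
  have hcos := sum_weight_mul_cos_le m p hp hp2 θ hθ
  have hmin := min_le_one_sub_exp (p * ∑ i, θ i ^ 2)
    (mul_nonneg hp (Finset.sum_nonneg fun i _ => sq_nonneg _))
  rw [← mul_assoc] at hmin
  linarith
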